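/- Let K be a field of characteristic 0, let A be a Cohen-Macaulay standard graded K-algebra of odd Krull dimension d with h-polynomial h_A(t), and let Θ = θ_1,…,θ_d be a linear system of parameters for A. If r ≥ d/2 and deg h_A(t) ≤ d/2, then A_Θ^⟨r⟩ has the weak Lefschetz property. -/

import Mathlib

/-- The degree-`i` component of the ideal `(θ₁^r, …, θ_d^r) A^⟨r⟩` of the `r`-th Veronese
subalgebra `A^⟨r⟩ = ⊕_i A_{ir}`, viewed as a `K`-submodule of `A`:
it is `0` in degree `0` and `θ₁^r A_{ir} + ⋯ + θ_d^r A_{ir}` in degree `i+1`.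
The degree-`i` component of `A_Θ^⟨r⟩ = A^⟨r⟩/(θ₁^r, …, θ_d^r)A^⟨r⟩` is then
`𝒜 (i*r) ⧸ veroneseLsopIdealComponent K 𝒜 θ r i`. -/
noncomputable def veroneseLsopIdealComponent (K : Type*) {A : Type*} [CommRing K] [CommRing A]
    [Algebra K A] (𝒜 : ℕ → Submodule K A) {d : ℕ} (θ : Fin d → A) (r : ℕ) :
    ℕ → Submodule K A
  | 0 => ⊥
  | (i + 1) => ⨆ j : Fin d, Submodule.map (LinearMap.mulLeft K (θ j ^ r)) (𝒜 (i * r))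

namespace VWL
set_option linter.unusedSectionVars false

section sl2
variable {K V : Type*} [Field K] [CharZero K] [AddCommGroup V] [Module K V]
  (E F : V →ₗ[K] V) (W : ℕ → Submodule K V) (D : ℕ)

theorem pow_mem (hE : ∀ n, ∀ v ∈ W n, E v ∈ W (n + 1)) (k : ℕ) :
    ∀ n, ∀ v ∈ W n, (E ^ k) v ∈ W (n + k) := by
  induction k with
  | zero => intro n v hv; simpa using hv
  | succ k ih =>
    intro n v hv
    rw [pow_succ']
    exact hE _ _ (ih n v hv)

theorem comm_pow (hE : ∀ n, ∀ v ∈ W n, E v ∈ W (n + 1))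
    (hc : ∀ n, ∀ v ∈ W n, F (E v) = E (F v) + ((D : K) - 2 * n) • v) (n : ℕ) (v : V)
    (hv : v ∈ W n) (k : ℕ) :
    F ((E ^ (k + 1)) v) = (E ^ (k + 1)) (F v) +
      (((k : K) + 1) * ((D : K) - 2 * n - k)) • (E ^ k) v := by
  induction k with
  | zero => simpa using hc n v hv
  | succ k ih =>
    have h1 := hc _ _ (pow_mem E W hE (k + 1) n v hv)
    have e1 : ∀ u, (E ^ (k + 1 + 1)) u = E ((E ^ (k + 1)) u) := fun u => by
      rw [pow_succ' E (k + 1)]; rfl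
    have e2 : ∀ u, (E ^ (k + 1)) u = E ((E ^ k) u) := fun u => by
      rw [pow_succ' E k]; rfl
    rw [e1, h1, ih, e1, map_add, map_smul, ← e2, add_assoc, ← add_smul]
    congr 2
    push_cast
    ring

theorem sl2_inj (hE : ∀ n, ∀ v ∈ W n, E v ∈ W (n + 1))
    (hF : ∀ n, ∀ v ∈ W (n + 1), F v ∈ W n) (hF0 : ∀ v ∈ W 0, F v = 0)
    (hc : ∀ n, ∀ v ∈ W n, F (E v) = E (F v) + ((D : K) - 2 * n) • v) (n : ℕ) :
    ∀ k v, v ∈ W n → 2 * n + k ≤ D → (E ^ k) v = 0 → v = 0 := by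
  induction n with
  | zero =>
    intro k
    induction k with
    | zero => intro v _ _ h; simpa using h
    | succ k ih =>
      intro v hv hk h
      have h1 := comm_pow E F W D hE hc 0 v hv k
      rw [h, hF0 v hv, map_zero, map_zero, zero_add] at h1
      have h2 := (smul_eq_zero.1 h1.symm).resolve_left (by
        refine mul_ne_zero (Nat.cast_add_one_ne_zero _) ?_
        have : (D : K) = ((D - k - 1 : ℕ) : K) + k + 1 := by
          have : D = (D - k - 1) + k + 1 := by omega
          conv_lhs => rw [this]
          push_cast; ring
        rw [this]
        have h3 : (((D - k - 1 : ℕ) : K) + 1) ≠ 0 := Nat.cast_add_one_ne_zero _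
        intro h4; apply h3; rw [← h4]; push_cast; ring)
      exact ih v hv (by omega) h2
  | succ n ihn =>
    intro k
    induction k with
    | zero => intro v _ _ h; simpa using h
    | succ k ih =>
      intro v hv hk h
      have h1 := comm_pow E F W D hE hc _ v hv k
      have hFv : F v = 0 := by
        refine ihn (k + 2) _ (hF _ _ hv) (by omega) ?_
        have h2 := congrArg E h1
        rw [h, map_zero, map_zero, map_add, map_smul] at h2
        have e1 : ∀ u, (E ^ (k + 2)) u = E ((E ^ (k + 1)) u) := fun u => by
          rw [pow_succ' E (k + 1)]; rfl
        have e2 : ∀ u, (E ^ (k + 1)) u = E ((E ^ k) u) := fun u => by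
          rw [pow_succ' E k]; rfl
        rw [← e1, ← e2, h, smul_zero, add_zero] at h2
        exact h2.symm
      rw [h, hFv, map_zero, map_zero, zero_add] at h1
      have h2 := (smul_eq_zero.1 h1.symm).resolve_left (by
        refine mul_ne_zero (Nat.cast_add_one_ne_zero _) ?_
        have : (D : K) = ((D - k - 1 - 2 * (n + 1) : ℕ) : K) + k + 1 + 2 * (n + 1) := by
          have : D = (D - k - 1 - 2 * (n + 1)) + k + 1 + 2 * (n + 1) := by omega
          conv_lhs => rw [this]
          push_cast; ring
        rw [this]
        have h3 : (((D - k - 1 - 2 * (n + 1) : ℕ) : K) + 1) ≠ 0 := Nat.cast_add_one_ne_zero _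
        intro h4; apply h3; rw [← h4]; push_cast; ring)
      exact ih v hv (by omega) h2

theorem sl2_surj_aux (hE : ∀ n, ∀ v ∈ W n, E v ∈ W (n + 1))
    (hF : ∀ n, ∀ v ∈ W (n + 1), F v ∈ W n) (hF0 : ∀ v ∈ W 0, F v = 0)
    (hc : ∀ n, ∀ v ∈ W n, F (E v) = E (F v) + ((D : K) - 2 * n) • v)
    (hD : ∀ n, D < n → ∀ v ∈ W n, v = 0) (q : ℕ) :
    ∀ m, D + 1 ≤ m + q → ∀ k n, n + k = m → D + k ≤ 2 * m → ∀ y ∈ W m,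
      ∃ z ∈ W n, (E ^ k) z = y := by
  induction q with
  | zero =>
    intro m hm k n _ _ y hy
    exact ⟨0, zero_mem _, by rw [map_zero, hD m (by omega) y hy]⟩
  | succ q ihq =>
    intro m hm k
    induction k with
    | zero => intro n hn _ y hy; exact ⟨y, by simpa [← hn] using hy, by simp⟩
    | succ k ih =>
      intro n hn hk y hy
      obtain ⟨z, hz, hzy⟩ := ih (n + 1) (by omega) (by omega) y hy
      obtain ⟨u, hu, huy⟩ := ihq (m + 1) (by omega) (k + 2) n (by omega) (by omega) (E y)
        (hE _ _ hy)
      have h1 := comm_pow E F W D hE hc _ z hz k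
      have h2 := comm_pow E F W D hE hc _ u hu (k + 1)
      have e1 : ∀ u, (E ^ (k + 2)) u = (E ^ (k + 1)) (E u) := fun u => by
        rw [pow_succ E (k + 1)]; rfl
      have e2 : (E ^ (k + 1)) z = E y := by
        rw [pow_succ' E k, ← hzy]; rfl
      rw [show k + 1 + 1 = k + 2 from rfl, huy] at h2
      rw [e2, h2, e1, hzy] at h1
      have hEF : E (F u) ∈ W n := by
        cases n with
        | zero => rw [hF0 u hu, map_zero]; exact zero_mem _
        | succ n => exact hE _ _ (hF _ _ hu)
      set c := (((k : K) + 1) * ((D : K) - 2 * ((n + 1 : ℕ) : K) - k)) with hcdef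
      have hcne : c ≠ 0 := by
        refine mul_ne_zero (Nat.cast_add_one_ne_zero _) ?_
        have : (2 * (n + 1) + k : K) = D + ((2 * (n + 1) + k - D - 1 : ℕ) : K) + 1 := by
          have : 2 * (n + 1) + k = D + (2 * (n + 1) + k - D - 1) + 1 := by omega
          exact_mod_cast this
        have h3 : (((2 * (n + 1) + k - D - 1 : ℕ) : K) + 1) ≠ 0 := Nat.cast_add_one_ne_zero _
        intro h4; apply h3; push_cast at h4; linear_combination -h4 - this
      refine ⟨c⁻¹ • (E (F u) + ((((k + 1 : ℕ) : K) + 1) *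
        ((D : K) - 2 * (n : K) - ((k + 1 : ℕ) : K))) • u - F z), ?_, ?_⟩
      · exact Submodule.smul_mem _ _ (sub_mem (add_mem hEF (Submodule.smul_mem _ _ hu)) (hF _ _ hz))
      · rw [map_smul, map_sub, map_add, map_smul, h1, add_sub_cancel_left, smul_smul,
          inv_mul_cancel₀ hcne, one_smul]

end sl2

section poly
open MvPolynomial
variable {K : Type*} [Field K] [CharZero K] (d r : ℕ)

/-- The one-variable lowering operator. -/
noncomputable def lowOne (i : Fin d) : MvPolynomial (Fin d) K →ₗ[K] MvPolynomial (Fin d) K :=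
  ((r : K) - 1) • (pderiv i).toLinearMap -
    (LinearMap.mulLeft K (X i)) ∘ₗ (pderiv i).toLinearMap ∘ₗ (pderiv i).toLinearMap

theorem lowOne_apply (i : Fin d) (f : MvPolynomial (Fin d) K) :
    lowOne d r i f = C ((r : K) - 1) * pderiv i f - X i * pderiv i (pderiv i f) := by
  simp [lowOne, MvPolynomial.smul_eq_C_mul]

/-- The lowering operator. -/
noncomputable def low : MvPolynomial (Fin d) K →ₗ[K] MvPolynomial (Fin d) K :=
  ∑ i, lowOne d r i

/-- The ideal generated by the powers of the variables. -/
noncomputable def powIdeal (K : Type*) [Field K] (d r : ℕ) : Ideal (MvPolynomial (Fin d) K) :=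
  Ideal.span (Set.range fun j : Fin d => (X j : MvPolynomial (Fin d) K) ^ r)

theorem lowOne_X_mul (i j : Fin d) (f : MvPolynomial (Fin d) K) :
    lowOne d r i (X j * f) = X j * lowOne d r i f +
      if i = j then (C ((r : K) - 1) * f - 2 * (X i * pderiv i f)) else 0 := by
  split_ifs with h
  · subst h
    simp only [lowOne_apply, pderiv_mul, pderiv_X_self, map_add, one_mul]
    ring
  · simp only [lowOne_apply, pderiv_mul, pderiv_X_of_ne (Ne.symm h), zero_mul, zero_add]
    ring

theorem low_mul (n : ℕ) (f : MvPolynomial (Fin d) K) (hf : f.IsHomogeneous n) (hr : 1 ≤ r) :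
    low d r ((∑ j, X j) * f) = (∑ j, X j) * low d r f +
      (((d * (r - 1) : ℕ) : K) - 2 * n) • f := by
  have he := hf.sum_X_mul_pderiv
  simp only [low, LinearMap.sum_apply, Finset.sum_mul, map_sum, lowOne_X_mul]
  simp only [Finset.sum_add_distrib, Finset.mul_sum]
  rw [Finset.sum_comm]
  congr 1
  rw [Finset.sum_comm]
  simp only [Finset.sum_ite_eq, Finset.mem_univ, if_true, Finset.sum_sub_distrib]
  rw [← Finset.mul_sum, ← Finset.mul_sum, he]
  have h2 : (C (2 : K) : MvPolynomial (Fin d) K) = 2 := map_ofNat C 2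
  simp [MvPolynomial.smul_eq_C_mul, Nat.cast_sub hr, h2]
  ring

theorem lowOne_pow_mul (i j : Fin d) (hr : 1 ≤ r) (g : MvPolynomial (Fin d) K) :
    ∃ u, lowOne d r i (X j ^ r * g) = X j ^ r * u := by
  by_cases h : i = j
  · subst h
    refine ⟨C ((r : K) - 1) * pderiv i g - 2 * (r : MvPolynomial (Fin d) K) * pderiv i g -
      X i * pderiv i (pderiv i g), ?_⟩
    obtain ⟨t, rfl⟩ : ∃ t, r = t + 1 := ⟨r - 1, by omega⟩
    simp only [lowOne_apply, pderiv_mul, pderiv_X_self, map_add, pderiv_pow]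
    cases t with
    | zero => simp; ring
    | succ t =>
      simp
      ring
  · refine ⟨lowOne d r i g, ?_⟩
    simp only [lowOne_apply, pderiv_mul, pderiv_X_of_ne (Ne.symm h), pderiv_pow, zero_mul,
      mul_zero, zero_add]
    ring

theorem low_mem (hr : 1 ≤ r) (f : MvPolynomial (Fin d) K) (hf : f ∈ powIdeal K d r) :
    low d r f ∈ powIdeal K d r := by
  obtain ⟨c, rfl⟩ := (Ideal.mem_span_range_iff_exists_fun).1 hf
  rw [map_sum]
  refine Ideal.sum_mem _ fun j _ => ?_
  rw [low, LinearMap.sum_apply]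
  refine Ideal.sum_mem _ fun i _ => ?_
  rw [mul_comm]
  obtain ⟨u, hu⟩ := lowOne_pow_mul d r i j hr (c j)
  rw [hu]
  exact Ideal.mul_mem_right _ _ (Ideal.subset_span ⟨j, rfl⟩)

theorem low_homog (n : ℕ) (f : MvPolynomial (Fin d) K) (hf : f.IsHomogeneous (n + 1)) :
    (low d r f).IsHomogeneous n := by
  rw [low, LinearMap.sum_apply]
  refine IsHomogeneous.sum _ _ _ fun i _ => ?_
  rw [lowOne_apply]
  have h1 : (pderiv i f).IsHomogeneous n := hf.pderiv
  refine (h1.C_mul _).sub ?_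
  cases n with
  | zero =>
    rw [(totalDegree_eq_zero_iff_eq_C.1 (Nat.le_zero.1 h1.totalDegree_le)), pderiv_C, mul_zero]
    exact isHomogeneous_zero _ _ _
  | succ n =>
    have h2 : (pderiv i (pderiv i f)).IsHomogeneous n := h1.pderiv
    rw [add_comm n 1]
    exact (isHomogeneous_X _ _).mul h2

theorem low_zero (f : MvPolynomial (Fin d) K) (hf : f.IsHomogeneous 0) : low d r f = 0 := by
  rw [low, LinearMap.sum_apply]
  refine Finset.sum_eq_zero fun i _ => ?_
  rw [lowOne_apply, totalDegree_eq_zero_iff_eq_C.1 (Nat.le_zero.1 hf.totalDegree_le), pderiv_C]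
  simp

theorem mem_powIdeal_of_large (n : ℕ) (hn : d * (r - 1) < n) (hr : 1 ≤ r)
    (f : MvPolynomial (Fin d) K) (hf : f.IsHomogeneous n) : f ∈ powIdeal K d r := by
  rw [f.as_sum]
  refine Ideal.sum_mem _ fun α hα => ?_
  have hdeg : α.degree = n := by
    by_contra hne
    exact (mem_support_iff.1 hα) (hf.coeff_eq_zero hne)
  have : ∃ j, r ≤ α j := by
    by_contra hcon
    push Not at hcon
    have : α.degree ≤ ∑ j : Fin d, (r - 1) := by
      rw [Finsupp.degree_eq_sum]
      exact Finset.sum_le_sum fun j _ => by have := hcon j; omega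
    simp at this
    omega
  obtain ⟨j, hj⟩ := this
  have : monomial α (coeff α f) = X j ^ r * monomial (α - Finsupp.single j r) (coeff α f) := by
    rw [X_pow_eq_monomial, monomial_mul, one_mul, add_tsub_cancel_of_le]
    simpa using hj
  rw [this]
  exact Ideal.mul_mem_right _ _ (Ideal.subset_span ⟨j, rfl⟩)

theorem mulLeft_pow_apply (f g : MvPolynomial (Fin d) K) (k : ℕ) :
    ((LinearMap.mulLeft K f) ^ k) g = f ^ k * g := by
  rw [LinearMap.pow_mulLeft, LinearMap.mulLeft_apply]

/-- The combined strong Lefschetz property of monomial complete intersections. -/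
theorem slp (hr : 1 ≤ r) (n k : ℕ) :
    (2 * n + k ≤ d * (r - 1) → ∀ f : MvPolynomial (Fin d) K, f.IsHomogeneous n →
      (∑ j, X j) ^ k * f ∈ powIdeal K d r → f ∈ powIdeal K d r) ∧
    (d * (r - 1) ≤ 2 * n + k → ∀ f : MvPolynomial (Fin d) K, f.IsHomogeneous (n + k) →
      ∃ g : MvPolynomial (Fin d) K, g.IsHomogeneous n ∧
        f - (∑ j, X j) ^ k * g ∈ powIdeal K d r) := by
  set I : Submodule K (MvPolynomial (Fin d) K) := (powIdeal K d r).restrictScalars K with hI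
  set E0 : MvPolynomial (Fin d) K →ₗ[K] MvPolynomial (Fin d) K := LinearMap.mulLeft K (∑ j, X j)
    with hE0
  have hEI : I ≤ I.comap E0 := fun f hf => Ideal.mul_mem_left _ _ hf
  have hFI : I ≤ I.comap (low d r) := fun f hf => low_mem d r hr f hf
  set E := I.mapQ I E0 hEI with hEd
  set F := I.mapQ I (low d r) hFI with hFd
  set W : ℕ → Submodule K (MvPolynomial (Fin d) K ⧸ I) :=
    fun n => (homogeneousSubmodule (Fin d) K n).map I.mkQ with hW
  have hL : (∑ j, X j : MvPolynomial (Fin d) K).IsHomogeneous 1 :=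
    IsHomogeneous.sum _ _ _ fun i _ => isHomogeneous_X _ _
  have hE : ∀ n, ∀ v ∈ W n, E v ∈ W (n + 1) := by
    rintro n _ ⟨f, hf, rfl⟩
    refine ⟨E0 f, ?_, rfl⟩
    rw [add_comm]
    exact hL.mul hf
  have hF : ∀ n, ∀ v ∈ W (n + 1), F v ∈ W n := by
    rintro n _ ⟨f, hf, rfl⟩
    exact ⟨low d r f, low_homog d r n f hf, rfl⟩
  have hF0 : ∀ v ∈ W 0, F v = 0 := by
    rintro _ ⟨f, hf, rfl⟩
    rw [hFd, Submodule.mkQ_apply, Submodule.mapQ_apply, low_zero d r f hf]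
    rfl
  have hc : ∀ n, ∀ v ∈ W n, F (E v) = E (F v) + (((d * (r - 1) : ℕ) : K) - 2 * n) • v := by
    rintro n _ ⟨f, hf, rfl⟩
    have := low_mul d r n f hf hr
    rw [hFd, hEd]
    simp only [Submodule.mkQ_apply, Submodule.mapQ_apply]
    rw [hE0, LinearMap.mulLeft_apply, this]
    rfl
  have hD : ∀ n, d * (r - 1) < n → ∀ v ∈ W n, v = 0 := by
    rintro n hn _ ⟨f, hf, rfl⟩
    exact (Submodule.Quotient.mk_eq_zero _).2 (mem_powIdeal_of_large d r n hn hr f hf)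
  have hpow : ∀ k f, (E ^ k) (I.mkQ f) = I.mkQ ((∑ j, X j) ^ k * f) := by
    intro k f
    induction k with
    | zero => simp
    | succ k ih =>
      rw [pow_succ', pow_succ', mul_assoc]
      change E ((E ^ k) (I.mkQ f)) = _
      rw [ih]
      rfl
  constructor
  · intro hk f hf hmem
    have := sl2_inj E F W _ hE hF hF0 hc n k (I.mkQ f) ⟨f, hf, rfl⟩ hk (by
      rw [hpow]; exact (Submodule.Quotient.mk_eq_zero _).2 hmem)
    exact (Submodule.Quotient.mk_eq_zero I).1 this
  · intro hk f hf
    obtain ⟨z, ⟨g, hg, rfl⟩, hz⟩ := sl2_surj_aux E F W _ hE hF hF0 hc hD (d * (r - 1) + 1) (n + k)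
      (by omega) k n rfl (by omega) (I.mkQ f) ⟨f, hf, rfl⟩
    refine ⟨g, hg, ?_⟩
    rw [hpow] at hz
    exact (Submodule.Quotient.eq I).1 hz.symm

end poly
end VWL

namespace VWL
set_option linter.unusedSectionVars false

section regular
variable {A : Type*} [CommRing A]

/-- Elementwise regularity of a sequence modulo an ideal. -/
def Reg : (d : ℕ) → Ideal A → (Fin d → A) → Prop
  | 0, _, _ => True
  | d + 1, J, θ => (∀ a, θ 0 * a ∈ J → a ∈ J) ∧ Reg d (J ⊔ Ideal.span {θ 0}) (Fin.tail θ)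

theorem reg_of_list (d : ℕ) : ∀ (J : Ideal A) (θ : Fin d → A),
    (∀ i (hi : i < d), ∀ a, θ ⟨i, hi⟩ * a ∈ J ⊔ Ideal.ofList ((List.ofFn θ).take i) →
      a ∈ J ⊔ Ideal.ofList ((List.ofFn θ).take i)) → Reg d J θ := by
  induction d with
  | zero => intro J θ _; trivial
  | succ d ih =>
    intro J θ h
    refine ⟨?_, ih _ _ ?_⟩
    · have := h 0 (by omega)
      simpa using this
    · intro i hi a ha
      have := h (i + 1) (by omega) a
      rw [List.ofFn_succ, List.take_succ_cons, Ideal.ofList_cons, ← sup_assoc] at this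
      exact this ha

theorem reg_of_isWeaklyRegular (d : ℕ) (θ : Fin d → A)
    (h : RingTheory.Sequence.IsWeaklyRegular A (List.ofFn θ)) : Reg d ⊥ θ := by
  refine reg_of_list d ⊥ θ fun i hi a ha => ?_
  have h1 := h.regular_mod_prev i (by simpa using hi)
  rw [bot_sup_eq] at ha ⊢
  have h2 : (Ideal.ofList ((List.ofFn θ).take i) • ⊤ : Submodule A A) =
    Ideal.ofList ((List.ofFn θ).take i) := by simp
  rw [h2] at h1
  rw [← Submodule.Quotient.mk_eq_zero] at ha ⊢
  apply h1
  simp only [List.getElem_ofFn, smul_zero]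
  rw [← ha]
  rfl

theorem span_range_succ (d : ℕ) (J : Ideal A) (θ : Fin (d + 1) → A) :
    J ⊔ Ideal.span {θ 0} ⊔ Ideal.span (Set.range (Fin.tail θ)) =
      J ⊔ Ideal.span (Set.range θ) := by
  rw [sup_assoc, ← Ideal.span_union]
  congr 2
  ext x
  simp [Fin.exists_fin_succ, Fin.tail, eq_comm]

open MvPolynomial in
/-- A family independent modulo the regular sequence is independent over the polynomial ring. -/
theorem linInd {K ι : Type*} [Field K] [Algebra K A] [Fintype ι] (e : ι → A) (d : ℕ) :
    ∀ (J : Ideal A) (θ : Fin d → A), Reg d J θ →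
    (∀ c : ι → K, ∑ k, algebraMap K A (c k) * e k ∈ J ⊔ Ideal.span (Set.range θ) → ∀ k, c k = 0) →
    ∀ p : ι → MvPolynomial (Fin d) K, ∑ k, aeval θ (p k) * e k ∈ J → ∀ k, p k = 0 := by
  induction d with
  | zero =>
    intro J θ _ hc p hp k
    have hC : ∀ k, p k = C (coeff 0 (p k)) := fun k =>
      (MvPolynomial.eq_C_of_isEmpty (p k))
    rw [hC k, hc (fun k => coeff 0 (p k)) ?_ k, C_0]
    refine Ideal.mem_sup_left ?_
    convert hp using 3 with k
    conv_rhs => rw [hC k]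
    rw [aeval_C]
  | succ d ih =>
    intro J θ hreg hc
    have ih' := ih (J ⊔ Ideal.span {θ 0}) (Fin.tail θ) hreg.2 (by
      rw [span_range_succ]; exact hc)
    set φ : Polynomial (MvPolynomial (Fin d) K) →+* A :=
      Polynomial.eval₂RingHom (aeval (Fin.tail θ) : MvPolynomial (Fin d) K →ₐ[K] A).toRingHom (θ 0)
      with hφ
    have key : ∀ N : ℕ, ∀ P : ι → Polynomial (MvPolynomial (Fin d) K),
        (∀ k, (P k).degree < N) → ∑ k, φ (P k) * e k ∈ J → ∀ k, P k = 0 := by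
      intro N
      induction N with
      | zero =>
        intro P hP _ k
        exact Polynomial.degree_eq_bot.1 (by simpa using hP k)
      | succ N ihN =>
        intro P hP hs
        have hdec : ∀ k, φ (P k) = θ 0 * φ (P k).divX + aeval (Fin.tail θ) ((P k).coeff 0) := by
          intro k
          conv_lhs => rw [← Polynomial.divX_mul_X_add (P k)]
          rw [map_add, map_mul, mul_comm]
          congr 1
          · congr 1
            simp [hφ]
          · simp [hφ]
        have hs2 : ∑ k, φ (P k) * e k = θ 0 * (∑ k, φ (P k).divX * e k) +
            ∑ k, aeval (Fin.tail θ) ((P k).coeff 0) * e k := by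
          rw [Finset.mul_sum, ← Finset.sum_add_distrib]
          refine Finset.sum_congr rfl fun k _ => ?_
          rw [hdec k]; ring
        have h0 : ∀ k, (P k).coeff 0 = 0 := by
          refine ih' (fun k => (P k).coeff 0) ?_
          have : ∑ k, aeval (Fin.tail θ) ((P k).coeff 0) * e k =
            ∑ k, φ (P k) * e k - θ 0 * (∑ k, φ (P k).divX * e k) := by rw [hs2]; ring
          rw [this]
          exact sub_mem (Ideal.mem_sup_left hs) (Ideal.mem_sup_right
            (Ideal.mul_mem_right _ _ (Ideal.mem_span_singleton_self _)))
        have hX : ∀ k, P k = (P k).divX * Polynomial.X := fun k => by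
          conv_lhs => rw [← Polynomial.divX_mul_X_add (P k), h0 k, Polynomial.C_0, add_zero]
        have hdiv : ∀ k, (P k).divX = 0 := by
          refine ihN _ (fun k => ?_) ?_
          · rw [Polynomial.degree_lt_iff_coeff_zero]
            intro m hm
            rw [Polynomial.coeff_divX]
            exact (Polynomial.degree_lt_iff_coeff_zero _ _).1 (hP k) (m + 1) (by omega)
          · apply hreg.1
            have : ∑ k, aeval (Fin.tail θ) ((P k).coeff 0) * e k = 0 :=
              Finset.sum_eq_zero fun k _ => by rw [h0 k]; simp
            rw [this, add_zero] at hs2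
            rwa [← hs2]
        intro k
        rw [hX k, hdiv k, zero_mul]
    intro p hp k
    have hcomp : ∀ q : MvPolynomial (Fin (d + 1)) K, φ (finSuccEquiv K d q) = aeval θ q := by
      intro q
      have : (φ.comp (finSuccEquiv K d : MvPolynomial (Fin (d + 1)) K →+* _)) =
          (aeval θ : MvPolynomial (Fin (d + 1)) K →ₐ[K] A).toRingHom := by
        refine MvPolynomial.ringHom_ext (fun c => ?_) (fun i => ?_)
        · simp [hφ, finSuccEquiv_apply]
        · refine Fin.cases ?_ (fun j => ?_) i
          · simp [hφ, finSuccEquiv_X_zero]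
          · simp [hφ, finSuccEquiv_X_succ, Fin.tail]
      exact congrArg (fun f => f q) this
    have := key (∑ k, (finSuccEquiv K d (p k)).natDegree + 1) (fun k => finSuccEquiv K d (p k))
      (fun k => lt_of_le_of_lt Polynomial.degree_le_natDegree (by
        have : (finSuccEquiv K d (p k)).natDegree ≤ ∑ k, (finSuccEquiv K d (p k)).natDegree :=
          Finset.single_le_sum (f := fun k => (finSuccEquiv K d (p k)).natDegree)
            (fun _ _ => Nat.zero_le _) (Finset.mem_univ k)
        exact_mod_cast Nat.lt_succ_of_le this))
      (by simpa only [hcomp] using hp) k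
    simpa using this

end regular

section graded
variable {K A : Type*} [Field K] [CommRing A] [Algebra K A] (𝒜 : ℕ → Submodule K A)
  [GradedAlgebra 𝒜]

/-- A homogeneous element of a sum `J + (θ_j)` with `deg θ_j = r`. -/
theorem mem_sup_span {d : ℕ} (J : Ideal A) (hJ : J.IsHomogeneous 𝒜) (r : ℕ) (θ : Fin d → A)
    (hθ : ∀ j, θ j ∈ 𝒜 r) (m : ℕ) (x : A) (hx : x ∈ 𝒜 m) (hxJ : x ∈ J ⊔ Ideal.span (Set.range θ)) :
    ∃ y ∈ J, y ∈ 𝒜 m ∧ ∃ c : Fin d → A, (∀ j, if r ≤ m then c j ∈ 𝒜 (m - r) else c j = 0) ∧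
      x = y + ∑ j, θ j * c j := by
  obtain ⟨y, hy, z, hz, rfl⟩ := Submodule.mem_sup.1 hxJ
  obtain ⟨c, rfl⟩ := (Ideal.mem_span_range_iff_exists_fun).1 hz
  refine ⟨(DirectSum.decompose 𝒜 y m : A), hJ m hy, SetLike.coe_mem _,
    fun j => if r ≤ m then (DirectSum.decompose 𝒜 (c j) (m - r) : A) else 0, ?_, ?_⟩
  · intro j
    split_ifs
    · exact SetLike.coe_mem _
    · rfl
  · conv_lhs => rw [← DirectSum.decompose_of_mem_same 𝒜 hx]
    rw [DirectSum.decompose_add, DirectSum.add_apply, Submodule.coe_add, DirectSum.decompose_sum,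
      DFinsupp.finsetSum_apply, AddSubmonoidClass.coe_finsetSum]
    congr 1
    refine Finset.sum_congr rfl fun j _ => ?_
    rw [mul_comm, DirectSum.coe_decompose_mul_of_left_mem 𝒜 m (hθ j)]
    split_ifs <;> simp

theorem finrank_map_add {B : Type*} [AddCommGroup B] [Module K B] (U : Submodule K A)
    [Module.Finite K U] (f : A →ₗ[K] B) :
    Module.finrank K (U.map f) + Module.finrank K (U ⊓ LinearMap.ker f : Submodule K A) =
      Module.finrank K U := by
  rw [← LinearMap.finrank_range_add_finrank_ker (f.domRestrict U), LinearMap.range_domRestrict,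
    LinearMap.ker_domRestrict]
  congr 1
  rw [← Submodule.finrank_map_subtype_eq, Submodule.map_comap_subtype]

/-- Hilbert function of the quotient by a homogeneous ideal. -/
noncomputable def HF (J : Ideal A) (n : ℕ) : ℤ :=
  (Module.finrank K (𝒜 n) : ℤ) - Module.finrank K (𝒜 n ⊓ J.restrictScalars K : Submodule K A)

theorem hf_zero (J : Ideal A) (hJ : J.IsHomogeneous 𝒜) (t : A) (ht : t ∈ 𝒜 1) :
    HF 𝒜 (J ⊔ Ideal.span {t}) 0 = HF 𝒜 J 0 := by
  have : (𝒜 0 ⊓ (J ⊔ Ideal.span {t}).restrictScalars K : Submodule K A) =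
      𝒜 0 ⊓ J.restrictScalars K := by
    apply le_antisymm
    · rintro x ⟨hx, hxJ⟩
      obtain ⟨y, hy, hy0, c, hc, rfl⟩ := mem_sup_span 𝒜 J hJ 1 (fun _ : Fin 1 => t)
        (fun _ => ht) 0 x hx (by rw [Set.range_const]; exact hxJ)
      refine ⟨hx, ?_⟩
      have := hc 0
      simp only [Nat.le_zero, one_ne_zero, if_false] at this
      simpa [this] using hy
    · exact inf_le_inf_left _ (fun x hx => Ideal.mem_sup_left hx)
  rw [HF, HF, this]

theorem hf_succ (hfin : ∀ i, Module.Finite K (𝒜 i)) (J : Ideal A) (hJ : J.IsHomogeneous 𝒜)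
    (t : A) (ht : t ∈ 𝒜 1) (hreg : ∀ a, t * a ∈ J → a ∈ J) (n : ℕ) :
    HF 𝒜 (J ⊔ Ideal.span {t}) (n + 1) = HF 𝒜 J (n + 1) - HF 𝒜 J n := by
  have := hfin n
  have := hfin (n + 1)
  set J' := J ⊔ Ideal.span {t} with hJ'
  set Q := (J.restrictScalars K).mkQ with hQ
  have hker : LinearMap.ker Q = J.restrictScalars K := Submodule.ker_mkQ _
  have : Module.Finite K (𝒜 (n + 1) ⊓ J'.restrictScalars K : Submodule K A) :=
    Submodule.finiteDimensional_of_le inf_le_left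
  have e1 := finrank_map_add (𝒜 (n + 1) ⊓ J'.restrictScalars K) Q
  have e2 := finrank_map_add (𝒜 n) (Q ∘ₗ LinearMap.mulLeft K t)
  have i1 : (𝒜 (n + 1) ⊓ J'.restrictScalars K ⊓ LinearMap.ker Q : Submodule K A) =
      𝒜 (n + 1) ⊓ J.restrictScalars K := by
    rw [hker, inf_assoc]
    congr 1
    exact inf_eq_right.2 (fun x hx => Ideal.mem_sup_left hx)
  have i2 : (𝒜 n ⊓ LinearMap.ker (Q ∘ₗ LinearMap.mulLeft K t) : Submodule K A) =
      𝒜 n ⊓ J.restrictScalars K := by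
    congr 1
    ext a
    rw [LinearMap.ker_comp, hker]
    exact ⟨fun h => hreg a h, fun h => Ideal.mul_mem_left _ _ h⟩
  have i3 : (𝒜 n).map (Q ∘ₗ LinearMap.mulLeft K t) =
      (𝒜 (n + 1) ⊓ J'.restrictScalars K : Submodule K A).map Q := by
    apply le_antisymm
    · rintro _ ⟨a, ha, rfl⟩
      refine ⟨t * a, ⟨?_, ?_⟩, rfl⟩
      · rw [add_comm]; exact SetLike.mul_mem_graded ht ha
      · exact Ideal.mem_sup_right (Ideal.mul_mem_right _ _ (Ideal.mem_span_singleton_self _))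
    · rintro _ ⟨x, ⟨hx, hxJ⟩, rfl⟩
      obtain ⟨y, hy, hy0, c, hc, rfl⟩ := mem_sup_span 𝒜 J hJ 1 (fun _ : Fin 1 => t)
        (fun _ => ht) (n + 1) x hx (by rw [Set.range_const]; exact hxJ)
      refine ⟨c 0, by simpa using hc 0, ?_⟩
      have hQy : Q y = 0 := (Submodule.Quotient.mk_eq_zero _).2 hy
      rw [map_add, hQy]
      simp
  rw [i1] at e1
  rw [i2, i3] at e2
  simp only [HF]
  omega

theorem hf_all (hfin : ∀ i, Module.Finite K (𝒜 i)) (d : ℕ) : ∀ (J : Ideal A) (θ : Fin d → A),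
    J.IsHomogeneous 𝒜 → (∀ j, θ j ∈ 𝒜 1) → Reg d J θ →
    PowerSeries.mk (HF 𝒜 (J ⊔ Ideal.span (Set.range θ))) =
      PowerSeries.mk (HF 𝒜 J) * (1 - PowerSeries.X) ^ d := by
  induction d with
  | zero => intro J θ _ _ _; simp
  | succ d ih =>
    intro J θ hJ hθ hreg
    rw [← span_range_succ, ih _ (Fin.tail θ) ?_ (fun j => hθ j.succ) hreg.2, pow_succ', ← mul_assoc]
    · congr 1
      ext n
      rw [mul_sub, mul_one, map_sub]
      cases n with
      | zero => simpa using hf_zero 𝒜 J hJ _ (hθ 0)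
      | succ n =>
        rw [PowerSeries.coeff_succ_mul_X]
        simpa using hf_succ 𝒜 hfin J hJ _ (hθ 0) hreg.1 n
    · refine hJ.sup (Ideal.homogeneous_span 𝒜 _ ?_)
      rintro x rfl
      exact ⟨1, hθ 0⟩

theorem large_mem (hfin : ∀ i, Module.Finite K (𝒜 i)) (d : ℕ) (θ : Fin d → A)
    (hθ : ∀ j, θ j ∈ 𝒜 1) (hreg : Reg d ⊥ θ) (h : Polynomial ℤ)
    (hh : (h : PowerSeries ℤ) =
      (PowerSeries.mk fun i => (Module.finrank K (𝒜 i) : ℤ)) * (1 - PowerSeries.X) ^ d)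
    (n : ℕ) (hn : h.natDegree < n) (x : A) (hx : x ∈ 𝒜 n) : x ∈ Ideal.span (Set.range θ) := by
  have h1 := hf_all 𝒜 hfin d ⊥ θ (Ideal.IsHomogeneous.bot 𝒜) hθ hreg
  have h2 : HF 𝒜 ⊥ = fun i => (Module.finrank K (𝒜 i) : ℤ) := by
    funext i
    have : (𝒜 i ⊓ (⊥ : Ideal A).restrictScalars K : Submodule K A) = ⊥ := by simp
    rw [HF, this]
    simp
  rw [h2, ← hh, bot_sup_eq] at h1
  have h3 := congrArg (PowerSeries.coeff n) h1
  rw [PowerSeries.coeff_mk, Polynomial.coeff_coe, Polynomial.coeff_eq_zero_of_natDegree_lt hn,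
    HF] at h3
  have := hfin n
  have h4 := Submodule.eq_of_le_of_finrank_eq
    (inf_le_left : (𝒜 n ⊓ (Ideal.span (Set.range θ)).restrictScalars K : Submodule K A) ≤ 𝒜 n)
    (by omega)
  rw [← h4] at hx
  exact hx.2

theorem exists_fam (Θ : Ideal A) [Module.Finite K (A ⧸ Θ)] :
    ∃ (b : Set (A ⧸ Θ)) (_ : Fintype b) (e : b → A) (δ : b → ℕ),
      (∀ k, e k ∈ 𝒜 (δ k)) ∧ (∀ k, e k ∉ Θ) ∧
      (∀ c : b → K, ∑ k, algebraMap K A (c k) * e k ∈ Θ → ∀ k, c k = 0) ∧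
      (∀ a : A, ∃ c : b → K, a - ∑ k, algebraMap K A (c k) * e k ∈ Θ) := by
  classical
  obtain ⟨b, hb, hspan, hli⟩ := exists_linearIndependent K
    {y : A ⧸ Θ | ∃ n, ∃ a ∈ 𝒜 n, Ideal.Quotient.mk Θ a = y}
  have : Fintype b := (LinearIndependent.setFinite hli).fintype
  choose δ e he hmk using fun k : b => hb k.2
  have hsum : ∀ c : b → K, Ideal.Quotient.mk Θ (∑ k, algebraMap K A (c k) * e k) =
      ∑ k, c k • (k : A ⧸ Θ) := by
    intro c
    rw [map_sum]
    refine Finset.sum_congr rfl fun k _ => ?_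
    rw [map_mul, hmk, Algebra.smul_def]
    rfl
  refine ⟨b, this, e, δ, he, ?_, ?_, ?_⟩
  · intro k hk
    have := hli.ne_zero k
    rw [← hmk k] at this
    exact this (Ideal.Quotient.eq_zero_iff_mem.2 hk)
  · intro c hc k
    rw [← Ideal.Quotient.eq_zero_iff_mem, hsum] at hc
    exact Fintype.linearIndependent_iff.1 hli c hc k
  · intro a
    have hmem : Ideal.Quotient.mk Θ a ∈ Submodule.span K b := by
      rw [hspan, ← DirectSum.sum_support_decompose 𝒜 a, map_sum]
      exact Submodule.sum_mem _ fun n _ => Submodule.subset_span ⟨n, _, SetLike.coe_mem _, rfl⟩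
    have hmem' : Ideal.Quotient.mk Θ a ∈ Submodule.span K (Set.range ((↑) : b → A ⧸ Θ)) := by
      rwa [Subtype.range_coe]
    obtain ⟨c, hc⟩ := (Submodule.mem_span_range_iff_exists_fun K).1 hmem'
    refine ⟨c, ?_⟩
    rw [← Ideal.Quotient.eq_zero_iff_mem, map_sub, hsum, hc, sub_self]

open MvPolynomial in
theorem generate {ι : Type*} [Fintype ι] (e : ι → A) (δ : ι → ℕ) (he : ∀ k, e k ∈ 𝒜 (δ k))
    (d : ℕ) (θ : Fin d → A) (hθ : ∀ j, θ j ∈ 𝒜 1)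
    (hgen : ∀ a : A, ∃ c : ι → K, a - ∑ k, algebraMap K A (c k) * e k ∈ Ideal.span (Set.range θ))
    (n : ℕ) : ∀ a ∈ 𝒜 n, ∃ p : ι → MvPolynomial (Fin d) K,
      (∀ k, if δ k ≤ n then (p k).IsHomogeneous (n - δ k) else p k = 0) ∧
      a = ∑ k, aeval θ (p k) * e k := by
  have hΘ : (Ideal.span (Set.range θ)).IsHomogeneous 𝒜 := by
    refine Ideal.homogeneous_span 𝒜 _ ?_
    rintro _ ⟨j, rfl⟩
    exact ⟨1, hθ j⟩
  have hstep : ∀ n, ∀ a ∈ 𝒜 n, ∃ c : ι → K, ∃ y : Fin d → A,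
      (∀ j, if 1 ≤ n then y j ∈ 𝒜 (n - 1) else y j = 0) ∧
      a = ∑ k, (if δ k = n then algebraMap K A (c k) else 0) * e k + ∑ j, θ j * y j := by
    intro n a ha
    obtain ⟨c, hc⟩ := hgen a
    refine ⟨c, ?_⟩
    set a' := ∑ k, (if δ k = n then algebraMap K A (c k) else 0) * e k with ha'
    have hcoe : ∀ k, algebraMap K A (c k) * e k ∈ 𝒜 (δ k) := fun k => by
      rw [← Algebra.smul_def]; exact Submodule.smul_mem _ _ (he k)
    have hproj : (DirectSum.decompose 𝒜 (a - ∑ k, algebraMap K A (c k) * e k) n : A) = a - a' := by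
      rw [DirectSum.decompose_sub, DirectSum.sub_apply, AddSubgroupClass.coe_sub,
        DirectSum.decompose_of_mem_same 𝒜 ha, DirectSum.decompose_sum,
        DFinsupp.finsetSum_apply, AddSubmonoidClass.coe_finsetSum, ha']
      congr 1
      refine Finset.sum_congr rfl fun k _ => ?_
      split_ifs with hk
      · rw [DirectSum.decompose_of_mem_same 𝒜 (hk ▸ hcoe k)]
      · rw [DirectSum.decompose_of_mem_ne 𝒜 (hcoe k) hk, zero_mul]
    have hmem : a - a' ∈ 𝒜 n := hproj ▸ SetLike.coe_mem _
    have hmem2 : a - a' ∈ Ideal.span (Set.range θ) := hproj ▸ hΘ n hc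
    obtain ⟨z, hz, -, y, hy, hsum⟩ := mem_sup_span 𝒜 ⊥ (Ideal.IsHomogeneous.bot 𝒜) 1 θ hθ n _ hmem
      (Ideal.mem_sup_right hmem2)
    refine ⟨y, hy, ?_⟩
    rw [Submodule.mem_bot] at hz
    rw [hz, zero_add] at hsum
    rw [← hsum]; ring
  induction n with
  | zero =>
    intro a ha
    obtain ⟨c, y, hy, hsum⟩ := hstep 0 a ha
    refine ⟨fun k => if δ k = 0 then C (c k) else 0, fun k => ?_, ?_⟩
    · by_cases hk : δ k = 0
      · simpa [hk] using isHomogeneous_C _ _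
      · simp [hk]
    · rw [hsum, Finset.sum_eq_zero (s := Finset.univ) (f := fun j => θ j * y j), add_zero]
      · refine Finset.sum_congr rfl fun k _ => ?_
        by_cases hk : δ k = 0 <;> simp [hk]
      · intro j _
        have := hy j
        simp only [Nat.le_zero, one_ne_zero, if_false] at this
        rw [this, mul_zero]
  | succ n ih =>
    intro a ha
    obtain ⟨c, y, hy, hsum⟩ := hstep (n + 1) a ha
    have hy' : ∀ j, y j ∈ 𝒜 n := fun j => by simpa using hy j
    choose q hq hqs using fun j => ih (y j) (hy' j)
    refine ⟨fun k => (if δ k = n + 1 then C (c k) else 0) + ∑ j, X j * q j k, fun k => ?_, ?_⟩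
    · have hq' := fun j => hq j k
      beta_reduce
      rcases lt_trichotomy (δ k) (n + 1) with hk | hk | hk
      · rw [if_pos hk.le, if_neg hk.ne, zero_add]
        refine IsHomogeneous.sum _ _ _ fun j _ => ?_
        have := hq' j
        rw [if_pos (by omega)] at this
        rw [show n + 1 - δ k = 1 + (n - δ k) by omega]
        exact (isHomogeneous_X _ _).mul this
      · rw [if_pos hk.le, if_pos hk, hk, Nat.sub_self, Finset.sum_eq_zero, add_zero]
        · exact isHomogeneous_C _ _
        · intro j _
          have := hq' j
          rw [if_neg (by omega)] at this
          rw [this, mul_zero]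
      · rw [if_neg (by omega), if_neg (by omega), Finset.sum_eq_zero, add_zero]
        intro j _
        have := hq' j
        rw [if_neg (by omega)] at this
        rw [this, mul_zero]
    · rw [hsum]
      have : ∑ j, θ j * y j = ∑ k, aeval θ (∑ j, X j * q j k : MvPolynomial (Fin d) K) * e k := by
        simp only [map_sum, map_mul, aeval_X, Finset.sum_mul]
        rw [Finset.sum_comm]
        refine Finset.sum_congr rfl fun j _ => ?_
        conv_lhs => rw [hqs j, Finset.mul_sum]
        refine Finset.sum_congr rfl fun k _ => by ring
      rw [this, ← Finset.sum_add_distrib]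
      refine Finset.sum_congr rfl fun k _ => ?_
      rw [map_add, add_mul]
      congr 2
      split_ifs <;> simp

open MvPolynomial in
theorem aeval_powIdeal (d r : ℕ) (θ : Fin d → A) (f : MvPolynomial (Fin d) K)
    (hf : f ∈ powIdeal K d r) : aeval θ f ∈ Ideal.span (Set.range fun j => θ j ^ r) := by
  obtain ⟨c, rfl⟩ := (Ideal.mem_span_range_iff_exists_fun).1 hf
  rw [map_sum]
  refine Ideal.sum_mem _ fun j _ => ?_
  rw [map_mul, map_pow, aeval_X]
  exact Ideal.mul_mem_left _ _ (Ideal.subset_span ⟨j, rfl⟩)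

open MvPolynomial in
theorem aeval_mem {d : ℕ} (θ : Fin d → A) (hθ : ∀ j, θ j ∈ 𝒜 1) (n : ℕ)
    (f : MvPolynomial (Fin d) K) (hf : f.IsHomogeneous n) : aeval θ f ∈ 𝒜 n := by
  rw [f.as_sum, map_sum]
  refine Submodule.sum_mem _ fun α hα => ?_
  have hdeg : α.degree = n := by
    by_contra hne
    exact (mem_support_iff.1 hα) (hf.coeff_eq_zero hne)
  rw [aeval_monomial, ← Algebra.smul_def]
  refine Submodule.smul_mem _ _ ?_
  rw [← hdeg, Finsupp.degree, Finsupp.prod]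
  refine SetLike.prod_mem_graded _ _ _ fun j _ => ?_
  simpa using SetLike.pow_mem_graded (α j) (hθ j)

theorem comp_le {d : ℕ} (θ : Fin d → A) (r i : ℕ) (x : A)
    (hx : x ∈ veroneseLsopIdealComponent K 𝒜 θ r (i + 1)) :
    x ∈ Ideal.span (Set.range fun j => θ j ^ r) := by
  have : veroneseLsopIdealComponent K 𝒜 θ r (i + 1) ≤
      (Ideal.span (Set.range fun j => θ j ^ r)).restrictScalars K := by
    refine iSup_le fun j => ?_
    rintro _ ⟨a, _, rfl⟩
    exact Ideal.mul_mem_right _ _ (Ideal.subset_span ⟨j, rfl⟩)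
  exact this hx

theorem mem_comp {d : ℕ} (θ : Fin d → A) (hθ : ∀ j, θ j ∈ 𝒜 1) (r : ℕ) (hr : 1 ≤ r) (i : ℕ) (x : A)
    (hxi : x ∈ 𝒜 (i * r)) (hx : x ∈ Ideal.span (Set.range fun j => θ j ^ r)) :
    x ∈ veroneseLsopIdealComponent K 𝒜 θ r i := by
  obtain ⟨y, hy, -, c, hc, rfl⟩ := mem_sup_span 𝒜 ⊥ (Ideal.IsHomogeneous.bot 𝒜) r
    (fun j => θ j ^ r) (fun j => by simpa using SetLike.pow_mem_graded r (hθ j)) _ x hxi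
    (Ideal.mem_sup_right hx)
  rw [Submodule.mem_bot] at hy
  rw [hy, zero_add]
  refine Submodule.sum_mem _ fun j _ => ?_
  have hcj := hc j
  cases i with
  | zero =>
    rw [if_neg (by omega)] at hcj
    rw [hcj, mul_zero]
    exact zero_mem _
  | succ i =>
    rw [if_pos (by nlinarith), show (i + 1) * r - r = i * r by rw [add_mul]; omega] at hcj
    exact Submodule.mem_iSup_of_mem j ⟨c j, hcj, rfl⟩

end graded
end VWL

/-- **Theorem 1.2(iii), Kubitzke–Murai.**
Let `A` be a Cohen-Macaulay standard graded `K`-algebra of odd Krull dimension `d` over a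
field of characteristic `0`, `Θ = θ₁,…,θ_d` an l.s.o.p. for `A`.  If `r ≥ d/2` and
`deg h_A(t) ≤ d/2` (i.e. `d ≤ 2r` and `2 deg h_A(t) ≤ d`), then `A_Θ^⟨r⟩` (whose degree-`i`
component is `𝒜 (i*r) ⧸ veroneseLsopIdealComponent K 𝒜 θ r i`) has the weak Lefschetz
property: there is a linear form `w` (represented by an element of `𝒜 r = (A^⟨r⟩)_1`) such
that multiplication by `w` from the degree-`i` to the degree-`(i+1)` component is injective
or surjective for every `i ≥ 0`. -/
theorem veronese_weak_Lefschetz_odd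
    (K : Type*) [Field K] [CharZero K]
    (A : Type*) [CommRing A] [Algebra K A]
    (𝒜 : ℕ → Submodule K A) [GradedAlgebra 𝒜]
    (hstd : ∀ i, 𝒜 i = 𝒜 1 ^ i)
    (hfin : ∀ i, Module.Finite K (𝒜 i))
    (d : ℕ) (hdodd : Odd d) (hdim : ringKrullDim A = d)
    (hCM : ∀ θ' : Fin d → A, (∀ j, θ' j ∈ 𝒜 1) →
      Module.Finite K (A ⧸ Ideal.span (Set.range θ')) →
      RingTheory.Sequence.IsRegular A (List.ofFn θ'))
    (θ : Fin d → A) (hθ1 : ∀ j, θ j ∈ 𝒜 1)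
    (hθlsop : Module.Finite K (A ⧸ Ideal.span (Set.range θ)))
    (h : Polynomial ℤ)
    (hh : (h : PowerSeries ℤ) =
      (PowerSeries.mk fun i => (Module.finrank K (𝒜 i) : ℤ)) * (1 - PowerSeries.X) ^ d)
    (r : ℕ) (hr : 1 ≤ r) (hrbound : d ≤ 2 * r) (hdegbound : 2 * h.natDegree ≤ d) :
    ∃ w ∈ 𝒜 r, ∀ i : ℕ,
      (∀ x ∈ 𝒜 (i * r),
        w * x ∈ veroneseLsopIdealComponent K 𝒜 θ r (i + 1) →
          x ∈ veroneseLsopIdealComponent K 𝒜 θ r i) ∨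
      (∀ y ∈ 𝒜 ((i + 1) * r), ∃ x ∈ 𝒜 (i * r),
        y - w * x ∈ veroneseLsopIdealComponent K 𝒜 θ r (i + 1)) := by
  classical
  have hreg : VWL.Reg d ⊥ θ := VWL.reg_of_isWeaklyRegular d θ (hCM θ hθ1 hθlsop).toIsWeaklyRegular
  obtain ⟨b, _, e, δ, he, hne, hli, hgen⟩ := VWL.exists_fam 𝒜 (Ideal.span (Set.range θ))
  have hδ : ∀ k, δ k ≤ h.natDegree := by
    intro k
    by_contra hk
    exact hne k (VWL.large_mem 𝒜 hfin d θ hθ1 hreg h hh (δ k) (by omega) _ (he k))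
  have hrep := VWL.generate 𝒜 e δ he d θ hθ1 hgen
  have hind := VWL.linInd e d ⊥ θ hreg (by rw [bot_sup_eq]; exact hli)
  have hθr : ∀ j, θ j ^ r ∈ 𝒜 r := fun j => by simpa using SetLike.pow_mem_graded r (hθ1 j)
  have hw : (∑ j, θ j) ^ r ∈ 𝒜 r := by
    simpa using SetLike.pow_mem_graded r (Submodule.sum_mem (𝒜 1) fun j _ => hθ1 j)
  have hwa : ∀ p : MvPolynomial (Fin d) K,
      MvPolynomial.aeval θ ((∑ j, MvPolynomial.X j) ^ r * p) =
        (∑ j, θ j) ^ r * MvPolynomial.aeval θ p := by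
    intro p; simp
  have hdr : d * (r - 1) + d = d * r := by
    obtain ⟨t, rfl⟩ : ∃ t, r = t + 1 := ⟨r - 1, by omega⟩
    simp [mul_add]
  refine ⟨(∑ j, θ j) ^ r, hw, fun i => ?_⟩
  have hmr : (i + 1) * r = i * r + r := by ring
  by_cases hi : d ≤ 2 * i + 1
  · right
    intro y hy
    obtain ⟨p, hp, rfl⟩ := hrep _ y hy
    have hir : d * r ≤ 2 * (i * r) + r := by nlinarith
    have hle : ∀ k, δ k ≤ i * r := fun k => by
      have := hδ k
      have : i ≤ i * r := Nat.le_mul_of_pos_right _ hr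
      omega
    have hex : ∀ k, ∃ g : MvPolynomial (Fin d) K, g.IsHomogeneous (i * r - δ k) ∧
        p k - (∑ j, MvPolynomial.X j) ^ r * g ∈ VWL.powIdeal K d r := by
      intro k
      have h1 := hδ k
      have h2 := hle k
      have h3 := hp k
      rw [if_pos (by omega), show (i + 1) * r - δ k = i * r - δ k + r by omega] at h3
      exact (VWL.slp d r hr (i * r - δ k) r).2 (by omega) (p k) h3
    choose g hg hgm using hex
    have hx : ∑ k, MvPolynomial.aeval θ (g k) * e k ∈ 𝒜 (i * r) := by
      refine Submodule.sum_mem _ fun k _ => ?_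
      have := SetLike.mul_mem_graded (VWL.aeval_mem 𝒜 θ hθ1 _ _ (hg k)) (he k)
      rwa [Nat.sub_add_cancel (hle k)] at this
    refine ⟨_, hx, ?_⟩
    refine VWL.mem_comp 𝒜 θ hθ1 r hr (i + 1) _ (sub_mem hy ?_) ?_
    · rw [hmr, add_comm]
      exact SetLike.mul_mem_graded hw hx
    · rw [Finset.mul_sum, ← Finset.sum_sub_distrib]
      refine Ideal.sum_mem _ fun k _ => ?_
      rw [← mul_assoc, ← hwa, ← sub_mul, ← map_sub]
      exact Ideal.mul_mem_right _ _ (VWL.aeval_powIdeal d r θ _ (hgm k))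
  · left
    intro x hx hwx
    obtain ⟨p, hp, hxp⟩ := hrep _ x hx
    have hwx' : (∑ j, θ j) ^ r * x ∈ 𝒜 (r + i * r) := SetLike.mul_mem_graded hw hx
    obtain ⟨y0, hy0, -, y, hy, hsum⟩ := VWL.mem_sup_span 𝒜 ⊥ (Ideal.IsHomogeneous.bot 𝒜) r
      (fun j => θ j ^ r) hθr _ _ hwx' (Ideal.mem_sup_right (VWL.comp_le 𝒜 θ r i _ hwx))
    rw [Submodule.mem_bot] at hy0
    rw [hy0, zero_add] at hsum
    have hy' : ∀ j, y j ∈ 𝒜 (i * r) := fun j => by simpa using hy j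
    choose q _ hqs using fun j => hrep _ (y j) (hy' j)
    have hz := hind (fun k => (∑ j, MvPolynomial.X j) ^ r * p k -
      ∑ j, MvPolynomial.X j ^ r * q j k) (by
        rw [Submodule.mem_bot]
        simp only [map_sub, hwa, sub_mul, Finset.sum_sub_distrib]
        rw [sub_eq_zero]
        have h1 : ∑ k, (∑ j, θ j) ^ r * MvPolynomial.aeval θ (p k) * e k =
            (∑ j, θ j) ^ r * x := by
          rw [hxp, Finset.mul_sum]
          exact Finset.sum_congr rfl fun k _ => mul_assoc _ _ _
        rw [h1, hsum]
        simp only [map_sum, map_mul, map_pow, MvPolynomial.aeval_X, Finset.sum_mul]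
        rw [Finset.sum_comm]
        refine Finset.sum_congr rfl fun j _ => ?_
        conv_lhs => rw [hqs j, Finset.mul_sum]
        exact Finset.sum_congr rfl fun k _ => (mul_assoc _ _ _).symm)
    refine VWL.mem_comp 𝒜 θ hθ1 r hr i x hx ?_
    rw [hxp]
    refine Ideal.sum_mem _ fun k _ => Ideal.mul_mem_right _ _ (VWL.aeval_powIdeal d r θ _ ?_)
    have hpk := hp k
    split_ifs at hpk with hk
    · refine (VWL.slp d r hr (i * r - δ k) r).1 ?_ (p k) hpk ?_
      · have h2 : 2 * i + 3 ≤ d := by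
          obtain ⟨m, hm⟩ := hdodd
          omega
        have h3 : (2 * i + 3) * r ≤ d * r := Nat.mul_le_mul_right _ h2
        have h4 : (2 * i + 3) * r = 2 * (i * r) + 3 * r := by ring
        omega
      · rw [sub_eq_zero.1 (hz k)]
        refine Ideal.sum_mem _ fun j _ => ?_
        exact Ideal.mul_mem_right _ _ (Ideal.subset_span ⟨j, rfl⟩)
    · rw [hpk]; exact zero_mem _
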